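/- arXiv:2005.01150 — 2 statements merged into one kernel-verified Lean document; each statement's English description precedes it below -/
import Mathlib

section
/- Every interval preserving operator T on ℓ^p with 1 < p < ∞ has a non-trivial closed invariant subspace which is an ideal. -/
open scoped ENNReal

noncomputable section

/-- The `n`-th canonical unit vector of real `ℓᵖ`. -/
def e (p : ℝ≥0∞) (n : ℕ) : lp (fun _ : ℕ => ℝ) p := lp.single p n 1

/-- `T` is a lattice homomorphism: it sends coordinatewise suprema to
coordinatewise suprema. -/
def IsLatticeHom (p : ℝ≥0∞) [Fact (1 ≤ p)]
    (T : lp (fun _ : ℕ => ℝ) p →L[ℝ] lp (fun _ : ℕ => ℝ) p) : Prop :=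
  ∀ x y z : lp (fun _ : ℕ => ℝ) p,
    (∀ n, z n = max (x n) (y n)) → ∀ n, (T z) n = max ((T x) n) ((T y) n)

/-- `T` is a positive operator for the coordinatewise order. -/
def IsPositiveOp (p : ℝ≥0∞) [Fact (1 ≤ p)]
    (T : lp (fun _ : ℕ => ℝ) p →L[ℝ] lp (fun _ : ℕ => ℝ) p) : Prop :=
  ∀ x : lp (fun _ : ℕ => ℝ) p, (∀ n, 0 ≤ x n) → ∀ n, 0 ≤ (T x) n

/-- `T` has a non-trivial closed invariant ideal. -/
def HasNontrivialClosedInvariantIdeal (p : ℝ≥0∞) [Fact (1 ≤ p)]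
    (T : lp (fun _ : ℕ => ℝ) p →L[ℝ] lp (fun _ : ℕ => ℝ) p) : Prop :=
  ∃ I : Submodule ℝ (lp (fun _ : ℕ => ℝ) p),
    IsClosed (I : Set (lp (fun _ : ℕ => ℝ) p)) ∧ I ≠ ⊥ ∧ I ≠ ⊤ ∧
    (∀ x y : lp (fun _ : ℕ => ℝ) p, (∀ n, |x n| ≤ |y n|) → y ∈ I → x ∈ I) ∧
    (∀ x ∈ I, T x ∈ I)

/-- The matrix of `T` is tridiagonal. -/
def IsTridiagonal (p : ℝ≥0∞) [Fact (1 ≤ p)]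
    (T : lp (fun _ : ℕ => ℝ) p →L[ℝ] lp (fun _ : ℕ => ℝ) p) : Prop :=
  ∀ n m : ℕ, (m + 1 < n ∨ n + 1 < m) → (T (e p m)) n = 0

theorem aux_orbit (f : ℕ → ℕ) :
    ∃ S : Set ℕ, S.Nonempty ∧ S ≠ Set.univ ∧ ∀ m ∈ S, f m ∈ S := by
  refine ⟨Set.range (fun k => f^[k+1] 0), ⟨_, 0, rfl⟩, ?_, ?_⟩
  · intro h
    obtain ⟨k, hk⟩ : (0:ℕ) ∈ Set.range (fun k => f^[k+1] 0) := by rw [h]; trivial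
    have hper : Function.IsPeriodicPt f (k+1) 0 := hk
    have hfin : (Set.univ : Set ℕ).Finite := by
      refine Set.Finite.subset ((Set.finite_Iio (k+1)).image (fun j => f^[j] 0)) ?_
      rw [← h]
      rintro _ ⟨n, rfl⟩
      exact ⟨(n+1) % (k+1), Nat.mod_lt _ (Nat.succ_pos k), hper.iterate_mod_apply (n+1)⟩
    exact Set.infinite_univ hfin
  · rintro _ ⟨k, rfl⟩
    exact ⟨k+1, Function.iterate_succ_apply' f (k+1) 0⟩

theorem aux_e (p : ℝ≥0∞) (m n : ℕ) : (e p m) n = if n = m then 1 else 0 := by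
  unfold e
  rw [lp.coeFn_single, Pi.single_apply]

/-- Every interval preserving operator on `ℓᵖ` (`1 < p < ∞`) has a non-trivial
closed invariant subspace which is an ideal. -/
theorem stmt_1 (p : ℝ≥0∞) [Fact (1 ≤ p)] (hp1 : 1 < p) (hp2 : p ≠ ∞)
    (T : lp (fun _ : ℕ => ℝ) p →L[ℝ] lp (fun _ : ℕ => ℝ) p)
    (hTpos : IsPositiveOp p T)
    (hT : ∀ x : lp (fun _ : ℕ => ℝ) p, (∀ n, 0 ≤ x n) →
      T '' {y : lp (fun _ : ℕ => ℝ) p | ∀ n, 0 ≤ y n ∧ y n ≤ x n} =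
        {z : lp (fun _ : ℕ => ℝ) p | ∀ n, 0 ≤ z n ∧ z n ≤ (T x) n}) :
    HasNontrivialClosedInvariantIdeal p T := by
  classical
  have hone : ∀ m, ∃ a, ∀ n, n ≠ a → (T (e p m)) n = 0 := by
    intro m
    by_contra! hcon
    have hepos : ∀ n, 0 ≤ (e p m) n := by
      intro n; rw [aux_e]; split_ifs <;> norm_num
    have hTe := hTpos _ hepos
    obtain ⟨a, -, ha⟩ := hcon 0
    obtain ⟨b, hba, hb⟩ := hcon a
    have hz : (lp.single p a ((T (e p m)) a) : lp (fun _ : ℕ => ℝ) p) ∈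
        {z : lp (fun _ : ℕ => ℝ) p | ∀ n, 0 ≤ z n ∧ z n ≤ (T (e p m)) n} := by
      intro n
      rw [lp.coeFn_single]
      by_cases hn : n = a
      · subst hn; simp [hTe n]
      · simp [hn, hTe n]
    rw [← hT _ hepos] at hz
    obtain ⟨y, hy, hyz⟩ := hz
    have hye : y = (y m) • e p m := by
      ext n
      rw [lp.coeFn_smul, Pi.smul_apply, aux_e]
      have := hy n
      rw [aux_e] at this
      by_cases hn : n = m
      · subst hn; simp
      · simp only [hn, if_false] at this ⊢
        simp; linarith
    have hval : ∀ n, (T y) n = y m * (T (e p m)) n := by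
      intro n
      conv_lhs => rw [hye, map_smul, lp.coeFn_smul, Pi.smul_apply, smul_eq_mul]
    have h1 := hval b
    rw [hyz, lp.coeFn_single] at h1
    have h2 := hval a
    rw [hyz, lp.coeFn_single] at h2
    simp [hba] at h1
    simp at h2
    rcases h1 with h1 | h1
    · rw [h1, zero_mul] at h2; exact ha h2
    · exact hb h1
  choose f hf using hone
  obtain ⟨S, ⟨s, hs⟩, hSu, hSf⟩ := aux_orbit f
  obtain ⟨t, ht⟩ := (Set.ne_univ_iff_exists_notMem S).1 hSu
  have hcont : ∀ n, Continuous (fun x : lp (fun _ : ℕ => ℝ) p => x n) := by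
    intro n
    exact (continuous_apply n).comp lp.uniformContinuous_coe.continuous
  refine ⟨{ carrier := {x | ∀ n, n ∉ S → x n = 0}
            add_mem' := ?_, zero_mem' := ?_, smul_mem' := ?_ }, ?_, ?_, ?_, ?_, ?_⟩
  · intro x y hx hy n hn
    rw [lp.coeFn_add, Pi.add_apply, hx n hn, hy n hn, add_zero]
  · intro n hn
    rfl
  · intro c x hx n hn
    rw [lp.coeFn_smul, Pi.smul_apply, hx n hn, smul_zero]
  · change IsClosed {x : lp (fun _ : ℕ => ℝ) p | ∀ n, n ∉ S → x n = 0}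
    simp only [Set.setOf_forall]
    exact isClosed_iInter fun n => isClosed_iInter fun _ =>
      isClosed_eq (hcont n) continuous_const
  · intro h
    have hm : e p s ∈ (⊥ : Submodule ℝ (lp (fun _ : ℕ => ℝ) p)) := by
      rw [← h]
      intro n hn
      rw [aux_e, if_neg]
      rintro rfl
      exact hn hs
    have h0 : e p s = 0 := by simpa using hm
    have h1 := aux_e p s s
    rw [h0] at h1
    simp at h1
  · intro h
    have hm : e p t ∈ (⊤ : Submodule ℝ (lp (fun _ : ℕ => ℝ) p)) := trivial
    rw [← h] at hm
    have h1 := hm t ht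
    rw [aux_e] at h1
    simp at h1
  · intro x y hxy hy n hn
    have h1 := hxy n
    rw [hy n hn, abs_zero] at h1
    exact abs_nonpos_iff.1 h1
  · intro x hx n hn
    have hsum := lp.hasSum_single hp2 x
    have hsum2 : HasSum (fun m => (T (lp.single p m (x m))) n) ((T x) n) := by
      let ev : lp (fun _ : ℕ => ℝ) p →+ ℝ :=
        { toFun := fun x => x n, map_zero' := rfl, map_add' := fun _ _ => rfl }
      exact (hsum.map T T.continuous).map ev (hcont n)
    have hz : (fun m => (T (lp.single p m (x m))) n) = fun _ => (0:ℝ) := by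
      funext m
      have he : (lp.single p m (x m) : lp (fun _ : ℕ => ℝ) p) = (x m) • e p m := by
        unfold e
        rw [← lp.single_smul, smul_eq_mul, mul_one]
      rw [he, map_smul, lp.coeFn_smul, Pi.smul_apply, smul_eq_mul]
      by_cases hm : m ∈ S
      · rw [hf m n, mul_zero]
        rintro rfl
        exact hn (hSf m hm)
      · rw [hx m hm, zero_mul]
    rw [hz] at hsum2
    exact hsum2.unique hasSum_zero
end
end

section
/- Let T be a lattice homomorphism on ℓ^p (1 ≤ p < ∞) with matrix a_{n,m} = (T e_m) n. Then T is injective if and only if the matrix has no null columns, i.e., for every m there exists n with a_{n,m} ≠ 0 (equivalently, T e_m ≠ 0 for every m). -/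
open scoped ENNReal

noncomputable section

theorem aux_pos (p : ℝ≥0∞) [Fact (1 ≤ p)]
    (T : lp (fun _ : ℕ => ℝ) p →L[ℝ] lp (fun _ : ℕ => ℝ) p)
    (hT : IsLatticeHom p T) (x : lp (fun _ : ℕ => ℝ) p) (hx : T x = 0) (m : ℕ)
    (hm : 0 < x m) (n : ℕ) : (T (e p m)) n = 0 := by
  have hmem : Memℓp (fun n => max (x n) 0 : ℕ → ℝ) p := by
    refine (lp.memℓp x).mono' (fun i => ?_)
    rw [Real.norm_eq_abs, Real.norm_eq_abs, abs_of_nonneg (le_max_right _ _)]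
    exact max_le (le_abs_self _) (abs_nonneg _)
  let z : lp (fun _ : ℕ => ℝ) p := ⟨_, hmem⟩
  have hz : ∀ n, z n = max (x n) 0 := fun n => rfl
  have h1 := hT x 0 z (fun n => by rw [hz]; simp) n
  have h2 := hT z (x m • e p m) z (fun k => by
    rw [hz, lp.coeFn_smul, Pi.smul_apply, e, lp.single_apply]
    by_cases hk : k = m
    · subst hk; simp [hm.le]
    · simp [hk]) n
  have h3 := hT (e p m) 0 (e p m) (fun k => by
    rw [e, lp.single_apply]
    by_cases hk : k = m
    · subst hk; simp
    · simp [hk]) n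
  have h0 : (T x) n = 0 := by rw [hx]; simp
  rw [map_zero] at h1 h3
  rw [map_smul, lp.coeFn_smul, Pi.smul_apply, smul_eq_mul] at h2
  simp only [lp.coeFn_zero, Pi.zero_apply] at h1 h3
  rw [h0, max_self] at h1
  rw [h1] at h2
  have h4 : x m * (T (e p m)) n ≤ 0 := h2 ▸ le_max_right _ _
  have h5 : 0 ≤ (T (e p m)) n := h3 ▸ le_max_right _ _
  nlinarith

/-- A lattice homomorphism on `ℓᵖ` (`1 ≤ p < ∞`) is injective if and only if
its matrix `a n m = (T eₘ) n` has no null columns. -/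
theorem stmt_5 (p : ℝ≥0∞) [Fact (1 ≤ p)] (hp : p ≠ ∞)
    (T : lp (fun _ : ℕ => ℝ) p →L[ℝ] lp (fun _ : ℕ => ℝ) p)
    (hT : IsLatticeHom p T) :
    Function.Injective T ↔ ∀ m : ℕ, ∃ n : ℕ, (T (e p m)) n ≠ 0 := by
  constructor
  · intro hi m
    by_contra! h
    have h0 : T (e p m) = T 0 := by
      rw [map_zero]; ext n; simpa using h n
    have h1 := congrArg (fun f : lp (fun _ : ℕ => ℝ) p => f m) (hi h0)
    simp [e] at h1
  · intro h
    rw [injective_iff_map_eq_zero]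
    intro x hx
    ext m
    obtain ⟨n, hn⟩ := h m
    rcases lt_trichotomy (x m) 0 with hm | hm | hm
    · exact absurd (aux_pos p T hT (-x) (by simp [hx]) m (by simpa using hm) n) hn
    · simpa using hm
    · exact absurd (aux_pos p T hT x hx m hm n) hn
end
end
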